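/- The last token satisfies the condition: for every nonempty string s, the last token θ(s) is a canonical token that is a suffix of s, and θ(s) satisfies the Prefix Last-Token Condition with respect to s. -/

import Mathlib

/-!
Common BPE formalization preamble.

A token is a (nonempty) string over the alphabet `α`, modeled as `List α`.
A merge rule is a pair of tokens; a dictionary is an ordered list of rules
(earlier rules have strictly higher priority).
-/

namespace BPE

variable {α : Type*} [DecidableEq α]

/-- A token is a string over the alphabet (nonemptiness is imposed by hypotheses). -/
abbrev Token (α : Type*) := List α

/-- A merge rule is an ordered pair of tokens. -/
abbrev Rule (α : Type*) := Token α × Token α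

/-- A dictionary is an ordered list of merge rules; earlier = higher priority. -/
abbrev Dict (α : Type*) := List (Rule α)

/-- Apply a single merge rule to a token list, scanning left to right and replacing
each adjacent occurrence of `r.1` followed by `r.2` by the concatenated token,
resuming the scan after the newly formed token (no overlaps). -/
def applyRule (r : Rule α) : List (Token α) → List (Token α)
  | [] => []
  | [t] => [t]
  | t :: u :: rest =>
      if t = r.1 ∧ u = r.2 then (r.1 ++ r.2) :: applyRule r rest
      else t :: applyRule r (u :: rest)

/-- `φ₀(s)`: the list of single-character tokens of `s`. -/
def phi0 (s : List α) : List (Token α) := s.map (fun c => [c])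

/-- `φ_k(s)`: the token list after applying the first `k` rules of `D` to `s`. -/
def phiK (D : Dict α) (k : ℕ) (s : List α) : List (Token α) :=
  (D.take k).foldl (fun φ r => applyRule r φ) (phi0 s)

/-- The BPE tokenization `𝕋_D(s)`. -/
def tokenize (D : Dict α) (s : List α) : List (Token α) :=
  phiK D D.length s

/-- Detokenization `π`: concatenation of the tokens. -/
def detok (φ : List (Token α)) : List α := φ.flatten

/-- A dictionary is valid if all rule components are genuine (nonempty) tokens. -/
def ValidDict (D : Dict α) : Prop := ∀ r ∈ D, r.1 ≠ [] ∧ r.2 ≠ []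

/-- A token `t` is canonical if `𝕋_D(t) = [t]`. -/
def IsCanonical (D : Dict α) (t : Token α) : Prop := tokenize D t = [t]

/-- The last token `θ(s)`: last element of `𝕋_D(s)` (defaulting to `[]`). -/
def theta (D : Dict α) (s : List α) : Token α := (tokenize D s).getLastD []

/-- `j` (0-based) is the index of the canonical rule of `t`:
`φ_j(t)` has exactly two tokens and `φ_{j+1}(t) = [t]`. -/
def IsCanonicalRuleIdx (D : Dict α) (t : Token α) (j : ℕ) : Prop :=
  j < D.length ∧ (phiK D j t).length = 2 ∧ phiK D (j + 1) t = [t]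

open Classical in
/-- The (0-based) index of the canonical rule of `t` (junk value `0` if none exists). -/
noncomputable def canonIdx (D : Dict α) (t : Token α) : ℕ :=
  if h : ∃ j, IsCanonicalRuleIdx D t j then h.choose else 0

/-- Predecessor `pre(t)`: first token of the two-token stage `φ_{j-1}(t)`. -/
noncomputable def pre (D : Dict α) (t : Token α) : Token α :=
  (phiK D (canonIdx D t) t).headD []

/-- Successor `suc(t)`: second token of the two-token stage `φ_{j-1}(t)`. -/
noncomputable def suc (D : Dict α) (t : Token α) : Token α :=
  (phiK D (canonIdx D t) t).getLastD []

/-- `InPath D x a` means `a ∈ P(x)`: `a` is obtained from `x` by iterating `suc`,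
i.e. `a` lies on the ancestor path of `x` in the Successor Forest. -/
def InPath (D : Dict α) (x a : Token α) : Prop :=
  ∃ n : ℕ, (suc D)^[n] x = a

/-- `s` with the suffix `u` removed. -/
def dropSuffix (s u : List α) : List α := s.take (s.length - u.length)

/-- The Prefix Last-Token Condition of the canonical suffix token `t`
with respect to the string `s`. Atomic tokens satisfy it by definition;
a non-atomic token must satisfy Reachability and Priority dominance. -/
def PLTC (D : Dict α) (s t : Token α) : Prop :=
  t.length = 1 ∨
    (1 < t.length ∧
      InPath D (theta D (dropSuffix s (suc D t))) (pre D t) ∧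
      (theta D (dropSuffix s (suc D t)) ≠ pre D t →
        ∀ u : Token α, 1 < u.length → IsCanonical D u → suc D u = pre D t →
          InPath D (theta D (dropSuffix s (suc D t))) u →
          canonIdx D t < canonIdx D u))


theorem applyRule_split (r : Rule α) (φ : List (Token α)) :
    ∀ C E, applyRule r φ = C ++ E →
      ∃ A B, φ = A ++ B ∧ applyRule r A = C ∧ applyRule r B = E := by
  induction φ using applyRule.induct r with
  | case1 =>
    intro C E h
    simp [applyRule] at h
    exact ⟨[], [], by simp [applyRule, h]⟩
  | case2 t =>
    intro C E h
    cases C with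
    | nil => exact ⟨[], [t], by simpa [applyRule] using h⟩
    | cons c C' =>
      simp [applyRule] at h
      obtain ⟨rfl, rfl, rfl⟩ := h
      exact ⟨[t], [], by simp [applyRule]⟩
  | case3 t u rest hc ih =>
    intro C E h
    cases C with
    | nil => exact ⟨[], t :: u :: rest, by simpa [applyRule] using h⟩
    | cons c C' =>
      rw [applyRule, if_pos hc, List.cons_append, List.cons.injEq] at h
      obtain ⟨A, B, h1, h2, h3⟩ := ih C' E h.2
      refine ⟨t :: u :: A, B, by simp [h1], ?_, h3⟩
      rw [applyRule, if_pos hc, h2, h.1]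
  | case4 t u rest hc ih =>
    intro C E h
    cases C with
    | nil => exact ⟨[], t :: u :: rest, by simpa [applyRule] using h⟩
    | cons c C' =>
      rw [applyRule, if_neg hc, List.cons_append, List.cons.injEq] at h
      obtain ⟨A, B, h1, h2, h3⟩ := ih C' E h.2
      refine ⟨t :: A, B, by simp [h1], ?_, h3⟩
      cases A with
      | nil =>
        simp only [applyRule] at h2 ⊢
        rw [← h2, h.1]
      | cons a A' =>
        simp only [List.cons_append, List.cons.injEq] at h1
        obtain ⟨rfl, _⟩ := h1
        rw [applyRule, if_neg hc, h2, h.1]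

theorem applyRule_flatten (r : Rule α) (φ : List (Token α)) :
    (applyRule r φ).flatten = φ.flatten := by
  induction φ using applyRule.induct r with
  | case1 => rfl
  | case2 t => rfl
  | case3 t u rest hc ih =>
    rw [applyRule, if_pos hc]
    simp [ih, hc.1, hc.2]
  | case4 t u rest hc ih =>
    rw [applyRule, if_neg hc, List.flatten_cons, ih]; simp

theorem applyRule_ne (r : Rule α) (φ : List (Token α)) (h : ∀ t ∈ φ, t ≠ []) :
    ∀ t ∈ applyRule r φ, t ≠ [] := by
  induction φ using applyRule.induct r with
  | case1 => simp [applyRule]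
  | case2 t => simpa [applyRule] using h
  | case3 t u rest hc ih =>
    rw [applyRule, if_pos hc]
    have h1 := h t (by simp)
    have h2 := ih (fun v hv => h v (by simp [hv]))
    intro v hv
    rcases List.mem_cons.1 hv with rfl | hv
    · rw [← hc.1]; simp [h1]
    · exact h2 v hv
  | case4 t u rest hc ih =>
    rw [applyRule, if_neg hc]
    have h1 := h t (by simp)
    have h2 := ih (fun v hv => h v (List.mem_cons_of_mem _ hv))
    intro v hv
    rcases List.mem_cons.1 hv with rfl | hv
    · exact h1
    · exact h2 v hv

theorem applyRule_cons_ne_nil (r : Rule α) (t : Token α) (φ : List (Token α)) :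
    applyRule r (t :: φ) ≠ [] := by
  cases φ with
  | nil => simp [applyRule]
  | cons u rest => rw [applyRule]; split_ifs <;> simp

theorem applyRule_ne_nil (r : Rule α) (φ : List (Token α)) (h : φ ≠ []) :
    applyRule r φ ≠ [] := by
  cases φ with
  | nil => exact absurd rfl h
  | cons u rest => exact applyRule_cons_ne_nil r u rest

theorem applyRule_eq_singleton (r : Rule α) (φ : List (Token α)) (t : Token α)
    (h : applyRule r φ = [t]) : φ = [t] ∨ (φ = [r.1, r.2] ∧ t = r.1 ++ r.2) := by
  match φ, h with
  | [], h => simp [applyRule] at h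
  | [u], h => left; simpa [applyRule] using h
  | u :: v :: rest, h =>
    rw [applyRule] at h
    split_ifs at h with hc
    · right
      simp only [List.cons.injEq] at h
      obtain ⟨h1, h2⟩ := h
      have : rest = [] := by
        by_contra hr
        exact applyRule_ne_nil r rest hr h2
      subst this
      exact ⟨by rw [hc.1, hc.2], h1.symm⟩
    · simp only [List.cons.injEq] at h
      exact absurd h.2 (applyRule_cons_ne_nil r v rest)

/-- If the scan merges the final pair, then dropping the last token keeps the first
component of the pair as the last token. -/
theorem applyRule_key (x y : Token α) (hx : x ≠ []) (P : List (Token α)) :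
    (applyRule (x, y) (P ++ [x, y])).getLast? = some (x ++ y) →
    (applyRule (x, y) (P ++ [x])).getLast? = some x := by
  induction P using applyRule.induct (x, y) with
  | case1 => intro _; simp [applyRule]
  | case2 t =>
    intro h
    simp only [List.cons_append, List.nil_append] at h ⊢
    by_cases hc : t = x ∧ x = y
    · rw [applyRule, if_pos hc] at h
      simp [applyRule] at h
      exact absurd h hx
    · rw [applyRule, if_neg hc]
      simp [applyRule]
  | case3 t u rest hc ih =>
    intro h
    simp only [List.cons_append] at h ⊢
    rw [applyRule, if_pos hc] at h ⊢
    rw [List.getLast?_cons_of_ne_nil (applyRule_ne_nil _ _ (by simp))] at h ⊢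
    exact ih h
  | case4 t u rest hc ih =>
    intro h
    simp only [List.cons_append] at h ⊢
    rw [applyRule, if_neg hc] at h ⊢
    rw [List.getLast?_cons_of_ne_nil (applyRule_ne_nil _ _ (by simp))] at h ⊢
    exact ih h

theorem phiK_zero (D : Dict α) (s : List α) : phiK D 0 s = phi0 s := by
  simp [phiK]

theorem phiK_succ (D : Dict α) (k : ℕ) (h : k < D.length) (s : List α) :
    phiK D (k + 1) s = applyRule D[k] (phiK D k s) := by
  unfold phiK
  rw [List.take_add_one, List.foldl_append, List.getElem?_eq_getElem h]
  rfl

theorem phiK_succ' (D : Dict α) (k : ℕ) (h : ¬ k < D.length) (s : List α) :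
    phiK D (k + 1) s = phiK D k s := by
  have h1 : D.length ≤ k := by omega
  unfold phiK
  rw [List.take_of_length_le h1, List.take_of_length_le (Nat.le_succ_of_le h1)]

theorem phiK_flatten (D : Dict α) (k : ℕ) (s : List α) : (phiK D k s).flatten = s := by
  induction k with
  | zero =>
    rw [phiK_zero, phi0]
    induction s with
    | nil => rfl
    | cons a s ih => simp [ih]
  | succ k ih =>
    by_cases h : k < D.length
    · rw [phiK_succ D k h, applyRule_flatten, ih]
    · rw [phiK_succ' D k h, ih]

theorem phiK_ne (D : Dict α) (k : ℕ) (s : List α) : ∀ t ∈ phiK D k s, t ≠ [] := by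
  induction k with
  | zero => simp [phiK_zero, phi0]
  | succ k ih =>
    by_cases h : k < D.length
    · rw [phiK_succ D k h]; exact applyRule_ne _ _ ih
    · rw [phiK_succ' D k h]; exact ih

theorem phiK_ne_nil (D : Dict α) (k : ℕ) (s : List α) (hs : s ≠ []) : phiK D k s ≠ [] := by
  intro h
  have := phiK_flatten D k s
  rw [h] at this
  exact hs this.symm

theorem phiK_split (D : Dict α) (k : ℕ) (s : List α) :
    ∀ C E, phiK D k s = C ++ E →
      phiK D k C.flatten = C ∧ phiK D k E.flatten = E ∧
      ∀ i ≤ k, phiK D i s = phiK D i C.flatten ++ phiK D i E.flatten := by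
  induction k with
  | zero =>
    intro C E h
    have hf := phiK_flatten D 0 s
    rw [h, List.flatten_append] at hf
    rw [phiK_zero, phi0, List.map_eq_append_iff] at h
    obtain ⟨a, b, rfl, rfl, rfl⟩ := h
    have ha := phiK_flatten D 0 a
    have hb := phiK_flatten D 0 b
    rw [phiK_zero, phi0] at ha hb
    rw [ha, hb]
    refine ⟨by rw [phiK_zero, phi0], by rw [phiK_zero, phi0], ?_⟩
    intro i hi
    obtain rfl : i = 0 := by omega
    simp [phiK_zero, phi0]
  | succ k ih =>
    intro C E h
    by_cases hk : k < D.length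
    · have h0 := h
      rw [phiK_succ D k hk] at h
      obtain ⟨A, B, h1, h2, h3⟩ := applyRule_split _ _ _ _ h
      obtain ⟨e1, e2, e3⟩ := ih A B h1
      have fA : C.flatten = A.flatten := by rw [← h2, applyRule_flatten]
      have fB : E.flatten = B.flatten := by rw [← h3, applyRule_flatten]
      have g1 : phiK D (k + 1) C.flatten = C := by rw [phiK_succ D k hk, fA, e1, h2]
      have g2 : phiK D (k + 1) E.flatten = E := by rw [phiK_succ D k hk, fB, e2, h3]
      refine ⟨g1, g2, ?_⟩
      intro i hi
      rcases Nat.lt_or_ge k i with hik | hik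
      · obtain rfl : i = k + 1 := by omega
        rw [g1, g2, h0]
      · rw [fA, fB]; exact e3 i hik
    · have h0 := h
      rw [phiK_succ' D k hk] at h
      obtain ⟨e1, e2, e3⟩ := ih C E h
      refine ⟨by rw [phiK_succ' D k hk, e1], by rw [phiK_succ' D k hk, e2], ?_⟩
      intro i hi
      rcases Nat.lt_or_ge k i with hik | hik
      · obtain rfl : i = k + 1 := by omega
        rw [phiK_succ' D k hk, phiK_succ' D k hk, phiK_succ' D k hk]
        exact e3 k le_rfl
      · exact e3 i hik

theorem phiK_stable (D : Dict α) (t : Token α) (k i : ℕ) (hki : k ≤ i)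
    (h : phiK D k t = [t]) : phiK D i t = [t] := by
  induction i, hki using Nat.le_induction with
  | base => exact h
  | succ i _ ih =>
    by_cases hi : i < D.length
    · rw [phiK_succ D i hi, ih]; simp [applyRule]
    · rw [phiK_succ' D i hi, ih]

theorem phiK_ge (D : Dict α) (t : Token α) (i : ℕ) (h : D.length ≤ i) :
    phiK D i t = tokenize D t := by
  simp [tokenize, phiK, List.take_of_length_le h]

theorem canonical_of_phiK (D : Dict α) (t : Token α) (k : ℕ)
    (h : phiK D k t = [t]) : IsCanonical D t := by
  have := phiK_stable D t k (max k D.length) (le_max_left _ _) h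
  rw [phiK_ge D t _ (le_max_right _ _)] at this
  exact this

theorem phiK_atomic (D : Dict α) (t : Token α) (k : ℕ) (h : t.length = 1) :
    phiK D k t = [t] := by
  obtain ⟨c, rfl⟩ := List.length_eq_one_iff.1 h
  exact phiK_stable D [c] 0 k (Nat.zero_le _) (by simp [phiK_zero, phi0])

theorem exists_idx (D : Dict α) (t : Token α) (h : 1 < t.length) (hc : IsCanonical D t) :
    ∃ j, IsCanonicalRuleIdx D t j := by
  classical
  have hex : ∃ k, phiK D k t = [t] := ⟨D.length, hc⟩
  have h0 : Nat.find hex ≠ 0 := by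
    intro h0
    have := Nat.find_spec hex
    rw [h0, phiK_zero] at this
    have := congrArg List.length this
    simp [phi0] at this
    omega
  obtain ⟨j, hj⟩ := Nat.exists_eq_succ_of_ne_zero h0
  have h1 := Nat.find_spec hex
  rw [hj, Nat.succ_eq_add_one] at h1
  have h2 : ¬ phiK D j t = [t] := Nat.find_min hex (by omega)
  have hjl : j < D.length := by
    by_contra hh
    rw [phiK_succ' D j hh] at h1
    exact h2 h1
  refine ⟨j, hjl, ?_, h1⟩
  rw [phiK_succ D j hjl] at h1
  rcases applyRule_eq_singleton _ _ _ h1 with h3 | h3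
  · exact absurd h3 h2
  · rw [h3.1]; rfl

theorem canon_spec (D : Dict α) (t : Token α) (h : 1 < t.length) (hc : IsCanonical D t) :
    ∃ hj : canonIdx D t < D.length,
      phiK D (canonIdx D t) t = [pre D t, suc D t] ∧
      D[canonIdx D t] = (pre D t, suc D t) ∧
      t = pre D t ++ suc D t ∧ pre D t ≠ [] ∧ suc D t ≠ [] ∧
      phiK D (canonIdx D t + 1) t = [t] := by
  have hex := exists_idx D t h hc
  have hs : IsCanonicalRuleIdx D t (canonIdx D t) := by
    rw [canonIdx, dif_pos hex]; exact hex.choose_spec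
  obtain ⟨h1, h2, h3⟩ := hs
  have h4 : phiK D (canonIdx D t) t = [pre D t, suc D t] := by
    obtain ⟨a, b, hab⟩ := List.length_eq_two.1 h2
    unfold pre suc
    rw [hab]; rfl
  have h5 := h3
  rw [phiK_succ D _ h1, h4] at h5
  have hn := phiK_ne D (canonIdx D t) t
  rw [h4] at hn
  refine ⟨h1, h4, ?_, ?_, hn _ (by simp), hn _ (by simp), h3⟩
  · rcases applyRule_eq_singleton _ _ _ h5 with h6 | h6
    · simp at h6
    · simp only [List.cons.injEq, and_true] at h6
      rw [h6.1.1, h6.1.2]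
  · have := phiK_flatten D (canonIdx D t) t
    rw [h4] at this
    simpa using this.symm

theorem suc_length_le (D : Dict α) (t : Token α) : (suc D t).length ≤ t.length := by
  unfold suc
  have h := phiK_flatten D (canonIdx D t) t
  generalize phiK D (canonIdx D t) t = φ at h
  rcases List.eq_nil_or_concat φ with rfl | ⟨L, b, rfl⟩
  · simp
  · subst h
    simp [List.getLastD_eq_getLast?]

theorem inPath_length_le (D : Dict α) (x u : Token α) (h : InPath D x u) :
    u.length ≤ x.length := by
  obtain ⟨n, rfl⟩ := h
  induction n with
  | zero => simp
  | succ n ih =>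
    rw [Function.iterate_succ_apply']
    exact (suc_length_le D _).trans ih

theorem path_main (D : Dict α) (k : ℕ) (x : Token α) (n : ℕ) :
    ∀ z : Token α, z.length ≤ n → IsCanonical D z →
      (phiK D k z).getLast? = some x →
      InPath D z x ∧ ∀ u : Token α, 1 < u.length → IsCanonical D u → suc D u = x →
        InPath D z u → k ≤ canonIdx D u := by
  induction n with
  | zero =>
    intro z hz hc hx
    obtain rfl : z = [] := List.length_eq_zero_iff.1 (by omega)
    have h1 := phiK_flatten D k ([] : List α)
    have h2 := phiK_ne D k ([] : List α) x (List.mem_of_getLast? hx)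
    rw [List.flatten_eq_nil_iff] at h1
    exact absurd (h1 x (List.mem_of_getLast? hx)) h2
  | succ n ih =>
    intro z hz hc hx
    by_cases hzx : z = x
    · subst hzx
      refine ⟨⟨0, rfl⟩, ?_⟩
      intro u hu huc hsu hp
      have h1 := inPath_length_le D _ _ hp
      obtain ⟨_, _, _, h2, h3, _, _⟩ := canon_spec D u hu huc
      have h4 := congrArg List.length h2
      rw [hsu, List.length_append] at h4
      have := List.length_pos_of_ne_nil h3
      omega
    · have hsing : phiK D k z ≠ [z] := by
        intro h
        rw [h] at hx
        simp at hx
        exact hzx hx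
      have hz1 : 1 < z.length := by
        by_contra hh
        have : z.length = 1 ∨ z.length = 0 := by omega
        rcases this with h | h
        · exact hsing (phiK_atomic D z k h)
        · obtain rfl := List.length_eq_zero_iff.1 h
          have h1 := phiK_flatten D k ([] : List α)
          have h2 := phiK_ne D k ([] : List α) x (List.mem_of_getLast? hx)
          rw [List.flatten_eq_nil_iff] at h1
          exact absurd (h1 x (List.mem_of_getLast? hx)) h2
      obtain ⟨hj, h4, h5, h6, h7, h8, h9⟩ := canon_spec D z hz1 hc
      have hk : k ≤ canonIdx D z := by
        by_contra hh
        exact hsing (phiK_stable D z _ k (by omega) h9)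
      obtain ⟨e1, e2, e3⟩ := phiK_split D _ z [pre D z] [suc D z] h4
      simp only [List.flatten_singleton] at e1 e2 e3
      have hlast : (phiK D k (suc D z)).getLast? = some x := by
        rw [e3 k hk, List.getLast?_append_of_ne_nil _ (phiK_ne_nil D k _ h8)] at hx
        exact hx
      have hlen : (suc D z).length ≤ n := by
        have h10 := congrArg List.length h6
        rw [List.length_append] at h10
        have := List.length_pos_of_ne_nil h7
        omega
      obtain ⟨⟨m, hm⟩, q2⟩ := ih (suc D z) hlen (canonical_of_phiK D _ _ e2) hlast
      refine ⟨⟨m + 1, hm⟩, ?_⟩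
      intro u hu huc hsu hp
      obtain ⟨l, hl⟩ := hp
      cases l with
      | zero => 
        simp at hl
        rw [← hl]; exact hk
      | succ l => exact q2 u hu huc hsu ⟨l, hl⟩

theorem theta_split (D : Dict α) (s : List α) (hs : s ≠ []) :
    ∃ a, s = a ++ theta D s ∧ theta D s ≠ [] ∧ IsCanonical D (theta D s) ∧
      ∀ i ≤ D.length, phiK D i s = phiK D i a ++ phiK D i (theta D s) := by
  have hne : phiK D D.length s ≠ [] := phiK_ne_nil D _ s hs
  rcases List.eq_nil_or_concat (phiK D D.length s) with h | ⟨L, b, h⟩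
  · exact absurd h hne
  · rw [List.concat_eq_append] at h
    have hth : theta D s = b := by
      simp [theta, tokenize, h, List.getLastD_eq_getLast?]
    obtain ⟨e1, e2, e3⟩ := phiK_split D _ s L [b] h
    have hf := phiK_flatten D D.length s
    have hn := phiK_ne D D.length s b (by simp [h])
    rw [h] at hf
    simp only [List.flatten_append, List.flatten_singleton] at hf e2 e3
    rw [hth]
    exact ⟨L.flatten, hf.symm, hn, e2, e3⟩

/-- **The last token satisfies the condition.** For every nonempty string `s`,
`θ(s)` is a canonical suffix token of `s` and satisfies the Prefix Last-Token
Condition with respect to `s`. -/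
theorem last_token_satisfies [Fintype α] (D : Dict α) (hD : ValidDict D)
    (s : List α) (hs : s ≠ []) :
    IsCanonical D (theta D s) ∧ theta D s <:+ s ∧ PLTC D s (theta D s) := by
  obtain ⟨a, hsa, hne, hcan, hsp⟩ := theta_split D s hs
  refine ⟨hcan, ⟨a, hsa.symm⟩, ?_⟩
  generalize theta D s = t at *
  by_cases h1 : t.length = 1
  · exact Or.inl h1
  have hlt : 1 < t.length := by
    have := List.length_pos_of_ne_nil hne
    omega
  right
  obtain ⟨hj, h4, h5, h6, h7, h8, h9⟩ := canon_spec D t hlt hcan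
  have hdrop : dropSuffix s (suc D t) = a ++ pre D t := by
    have : s = (a ++ pre D t) ++ suc D t := by
      rw [List.append_assoc, ← h6]; exact hsa
    rw [dropSuffix, this, List.length_append, Nat.add_sub_cancel]
    exact List.take_left
  rw [hdrop]
  have hs1 := hsp _ hj.le
  have hs2 := hsp _ (Nat.succ_le_of_lt hj)
  rw [Nat.succ_eq_add_one, h9, phiK_succ D _ hj, hs1, h4, h5] at hs2
  have hs3 : phiK D (canonIdx D t) s = (phiK D (canonIdx D t) a ++ [pre D t]) ++ [suc D t] := by
    rw [hs1, h4]; simp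
  obtain ⟨e1, _, _⟩ := phiK_split D _ s _ _ hs3
  rw [List.flatten_append, phiK_flatten, List.flatten_singleton] at e1
  have hlast : (phiK D (canonIdx D t + 1) (a ++ pre D t)).getLast? = some (pre D t) := by
    rw [phiK_succ D _ hj, e1, h5]
    apply applyRule_key _ _ h7
    rw [hs2, ← h6]
    simp
  obtain ⟨b, _, hzne, hzc, hzsp⟩ := theta_split D (a ++ pre D t) (by simp [h7])
  rw [hzsp _ (Nat.succ_le_of_lt hj),
    List.getLast?_append_of_ne_nil _ (phiK_ne_nil D _ _ hzne)] at hlast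
  obtain ⟨p1, p2⟩ := path_main D _ _ _ _ le_rfl hzc hlast
  exact ⟨hlt, p1, fun _ u hu huc hsu hp => p2 u hu huc hsu hp⟩

end BPE
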